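/- (Lemma 3.5) Suppose ε_H ∈ (0,1), ζ ∈ (0,1), ⟨v, ∇²f(x) v⟩ ≥ -ε_H ‖v‖² for all v ∈ ℝⁿ, ‖∇f(x)‖ ≤ U_g with U_g > 0, and ∇f(x) ≠ 0. Let d satisfy ‖(∇²f(x) + 2ε_H I) d + ∇f(x)‖ ≤ (ζ/2)·min{‖∇f(x)‖, ε_H ‖d‖} together with ⟨∇f(x), (∇²f(x) + 2ε_H I) d + ∇f(x)⟩ = 0 (orthogonality of the initial and final CG residuals). Then the smallest nonnegative integer j_k such that f(x + θ^{j_k} d) < f(x) - (η/6) θ^{3 j_k} ‖d‖³ exists and satisfies j_k ≤ [ (1/2) log_θ( (3/(L_H+η)) · (1-ζ) ε_H² / (U_g √(1+ζ²/4)) ) ]_+ + 1, and moreover f(x) - f(x + θ^{j_k} d) ≥ (η/6)·min{ (4/(4 + ζ + √((4+ζ)² + 8 L_H)))³, (3θ²(1-ζ)/(L_H+η))³ } · min{‖∇f(x + θ^{j_k} d)‖³ ε_H^{-3}, ε_H³}. -/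

import Mathlib

open scoped RealInnerProductSpace

/-!
Taylor's inequality along `α • d` bounds `f (x + α • d) - f x` by the quadratic model plus
`L / 6 * (α * ‖d‖) ^ 3`. The regularization `2 * ε` dominates the curvature `-ε`, so the model
decreases by a multiple of `α * ε * ‖d‖ ^ 2`, and a step size can be rejected only while
`α ^ 2 * ‖d‖` exceeds a multiple of `ε`. Orthogonality of the residual to the gradient bounds
`ε * ‖d‖` by a multiple of the gradient norm, so rejection forces `α ^ 2` above a fixed threshold
and backtracking stops. For the decrease, either the full step is accepted, and then the new
gradient norm is at most a quadratic polynomial in `‖d‖`, which bounds `‖d‖` from below; or the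
last rejected step size bounds `α * ‖d‖` from below by a multiple of `ε`.
-/

section Taylor

variable {E F : Type*} [NormedAddCommGroup E] [NormedAddCommGroup F] [NormedSpace ℝ F]

lemma norm_sub_le_of_norm_deriv_le_mul_pow {φ φ' : ℝ → F} {a b C : ℝ} (hab : a ≤ b) (n : ℕ)
    (hφ : ∀ t ∈ Set.Icc a b, HasDerivWithinAt φ (φ' t) (Set.Icc a b) t)
    (bound : ∀ t ∈ Set.Ico a b, ‖φ' t‖ ≤ C * (t - a) ^ n) :
    ‖φ b - φ a‖ ≤ C / (n + 1) * (b - a) ^ (n + 1) := by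
  have hB (t : ℝ) : HasDerivAt (fun t ↦ C / (n + 1) * (t - a) ^ (n + 1)) (C * (t - a) ^ n) t := by
    refine ((((hasDerivAt_id t).sub_const a).pow (n + 1)).const_mul (C / (n + 1))).congr_deriv ?_
    have : (n : ℝ) + 1 ≠ 0 := by positivity
    simp only [id_eq, add_tsub_cancel_right, Nat.cast_add, Nat.cast_one]
    field_simp
  exact image_norm_le_of_norm_deriv_right_le_deriv_boundary
    (f := fun t ↦ φ t - φ a) (f' := φ')
    (fun t ht ↦ (hφ t ht).continuousWithinAt.sub continuousWithinAt_const)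
    (fun t ht ↦ ((hφ t (Set.Ico_subset_Icc_self ht)).sub_const _).mono_of_mem_nhdsWithin
      (Icc_mem_nhdsGE_of_mem ht))
    (by simp) hB bound (Set.right_mem_Icc.2 hab)

section NormedSpace

variable [NormedSpace ℝ E] {s : Set E} {x v : E} {L : ℝ}

lemma hasDerivWithinAt_comp_add_smul {f : E → F} {f' : E → E →L[ℝ] F}
    (hs : StarConvex ℝ x s) (hf : ∀ y ∈ s, HasFDerivWithinAt f (f' y) s y) (hv : x + v ∈ s)
    {t : ℝ} (ht : t ∈ Set.Icc (0 : ℝ) 1) :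
    HasDerivWithinAt (fun t : ℝ ↦ f (x + t • v)) (f' (x + t • v) v) (Set.Icc 0 1) t := by
  have hmaps : Set.MapsTo (fun t : ℝ ↦ x + t • v) (Set.Icc 0 1) s :=
    fun u hu ↦ hs.add_smul_mem hv hu.1 hu.2
  have hline : HasDerivWithinAt (fun t : ℝ ↦ x + t • v) v (Set.Icc 0 1) t := by
    simpa using (((hasDerivAt_id t).smul_const v).const_add x).hasDerivWithinAt
  exact (hf _ (hmaps ht)).comp_hasDerivWithinAt t hline hmaps

theorem norm_taylor_one_remainder_le {f : E → F} {f' : E → E →L[ℝ] F}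
    (hs : StarConvex ℝ x s) (hf : ∀ y ∈ s, HasFDerivWithinAt f (f' y) s y)
    (hlip : ∀ y ∈ s, ‖f' y - f' x‖ ≤ L * ‖y - x‖) (hv : x + v ∈ s) :
    ‖f (x + v) - f x - f' x v‖ ≤ L / 2 * ‖v‖ ^ 2 := by
  have hderiv (t : ℝ) (ht : t ∈ Set.Icc (0 : ℝ) 1) :
      HasDerivWithinAt (fun t : ℝ ↦ f (x + t • v) - t • f' x v)
        (f' (x + t • v) v - f' x v) (Set.Icc 0 1) t := by
    simpa using (hasDerivWithinAt_comp_add_smul hs hf hv ht).fun_sub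
      ((hasDerivWithinAt_id t _).smul_const (f' x v))
  have hbound (t : ℝ) (ht : t ∈ Set.Ico (0 : ℝ) 1) :
      ‖f' (x + t • v) v - f' x v‖ ≤ L * ‖v‖ ^ 2 * (t - 0) ^ 1 := by
    calc ‖(f' (x + t • v) - f' x) v‖
      _ ≤ ‖f' (x + t • v) - f' x‖ * ‖v‖ := ContinuousLinearMap.le_opNorm _ v
      _ ≤ L * ‖x + t • v - x‖ * ‖v‖ := by
        gcongr
        exact hlip _ (hs.add_smul_mem hv ht.1 ht.2.le)
      _ = L * ‖v‖ ^ 2 * (t - 0) ^ 1 := by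
        rw [add_sub_cancel_left, norm_smul, Real.norm_of_nonneg ht.1]
        ring
  convert norm_sub_le_of_norm_deriv_le_mul_pow zero_le_one 1 hderiv hbound using 1
  · congr 1
    simp only [one_smul, zero_smul, add_zero, sub_zero]
    abel
  · norm_num
    ring

end NormedSpace

theorem abs_taylor_two_remainder_le [InnerProductSpace ℝ E] [CompleteSpace E]
    {f : E → ℝ} {g : E → E} {H : E → E →L[ℝ] E} {s : Set E} {x v : E} {L : ℝ}
    (hs : StarConvex ℝ x s) (hf : ∀ y ∈ s, HasGradientWithinAt f (g y) s y)
    (hg : ∀ y ∈ s, HasFDerivWithinAt g (H y) s y)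
    (hlip : ∀ y ∈ s, ‖H y - H x‖ ≤ L * ‖y - x‖) (hv : x + v ∈ s) :
    |f (x + v) - f x - ⟪g x, v⟫ - 1 / 2 * ⟪v, H x v⟫| ≤ L / 6 * ‖v‖ ^ 3 := by
  have hderiv (t : ℝ) (ht : t ∈ Set.Icc (0 : ℝ) 1) :
      HasDerivWithinAt (fun t : ℝ ↦ f (x + t • v) - t * ⟪g x, v⟫ - t ^ 2 * (1 / 2 * ⟪v, H x v⟫))
        (⟪g (x + t • v) - g x - H x (t • v), v⟫) (Set.Icc 0 1) t := by
    refine (((hasDerivWithinAt_comp_add_smul hs (fun y hy ↦ (hf y hy).hasFDerivWithinAt) hv ht).sub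
      ((hasDerivWithinAt_id t _).mul_const ⟪g x, v⟫)).sub
      ((hasDerivAt_pow 2 t).hasDerivWithinAt.mul_const _)).congr_deriv ?_
    simp only [InnerProductSpace.toDual_apply_apply, inner_sub_left, map_smul,
      real_inner_smul_left, real_inner_comm v (H x v)]
    ring
  have hbound (t : ℝ) (ht : t ∈ Set.Ico (0 : ℝ) 1) :
      ‖⟪g (x + t • v) - g x - H x (t • v), v⟫‖ ≤ L / 2 * ‖v‖ ^ 3 * (t - 0) ^ 2 := by
    calc ‖⟪g (x + t • v) - g x - H x (t • v), v⟫‖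
      _ ≤ ‖g (x + t • v) - g x - H x (t • v)‖ * ‖v‖ := norm_inner_le_norm _ _
      _ ≤ L / 2 * ‖t • v‖ ^ 2 * ‖v‖ := by
        gcongr
        exact norm_taylor_one_remainder_le hs hg hlip (hs.add_smul_mem hv ht.1 ht.2.le)
      _ = L / 2 * ‖v‖ ^ 3 * (t - 0) ^ 2 := by
        rw [norm_smul, Real.norm_of_nonneg ht.1]
        ring
  convert norm_sub_le_of_norm_deriv_le_mul_pow zero_le_one 2 hderiv hbound using 1
  · rw [Real.norm_eq_abs]
    congr 1
    simp only [one_smul, zero_smul, add_zero]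
    ring
  · norm_num
    ring

end Taylor

section Scalar

lemma min_pow_mul_min_pow_of_odd {n : ℕ} (hn : Odd n) (a b c d : ℝ) :
    min (a ^ n) (b ^ n) * min (c ^ n) (d ^ n) = (min a b * min c d) ^ n := by
  have hmono : Monotone fun t : ℝ ↦ t ^ n := hn.strictMono_pow.monotone
  rw [mul_pow, hmono.map_min, hmono.map_min]

theorem exists_backtracking_exponent {θ C : ℝ} (hθ : θ ∈ Set.Ioo (0 : ℝ) 1) (hC : 0 < C)
    {m : ℕ} (hm : m ≠ 0) {p : ℕ → Prop} (hp : ∀ j, ¬ p j → C < (θ ^ j) ^ m) :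
    ∃ j, p j ∧ (∀ i < j, ¬ p i) ∧ (j : ℝ) ≤ max (1 / m * Real.logb θ C) 0 + 1 := by
  classical
  have hm' : (0 : ℝ) < m := by positivity
  have hlog (j : ℕ) (hj : ¬ p j) : (j : ℝ) < 1 / m * Real.logb θ C := by
    rw [one_div_mul_eq_div, lt_div_iff₀ hm', Real.lt_logb_iff_rpow_lt_of_base_lt_one hθ.1 hθ.2 hC,
      Real.rpow_mul_natCast hθ.1.le, Real.rpow_natCast]
    exact hp j hj
  have hex : ∃ j, p j := by
    obtain ⟨j, hj⟩ := exists_nat_gt (1 / m * Real.logb θ C)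
    exact ⟨j, by_contra fun h ↦ hj.not_gt (hlog j h)⟩
  refine ⟨Nat.find hex, Nat.find_spec hex, fun i hi ↦ Nat.find_min hex hi, ?_⟩
  rcases hfind : Nat.find hex with _ | k
  · simp only [Nat.cast_zero]
    positivity
  · have hk := hlog k (Nat.find_min hex (hfind ▸ k.lt_succ_self))
    push_cast
    gcongr
    exact hk.le.trans (le_max_left _ _)

lemma quadratic_root_rationalized {b L : ℝ} (hb : 0 < b) (hL : 0 ≤ L) :
    L / 2 * (4 / (b + √(b ^ 2 + 8 * L))) ^ 2 + b / 2 * (4 / (b + √(b ^ 2 + 8 * L))) = 1 := by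
  have hsq : √(b ^ 2 + 8 * L) ^ 2 = b ^ 2 + 8 * L := Real.sq_sqrt (by positivity)
  field_simp
  ring_nf at hsq ⊢
  linear_combination (-2) * hsq

-- The factor multiplying the minimum is the positive root of `L / 2 * c ^ 2 + b / 2 * c = 1`.
lemma mul_min_le_of_le_quadratic {b L ε G t : ℝ} (hb : 0 < b) (hL : 0 ≤ L) (hε : 0 < ε)
    (ht : 0 ≤ t) (hG₀ : 0 ≤ G) (hG : G ≤ L / 2 * t ^ 2 + b / 2 * ε * t) :
    4 / (b + √(b ^ 2 + 8 * L)) * min (G / ε) ε ≤ t := by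
  have hroot := quadratic_root_rationalized hb hL
  have hc : 0 < 4 / (b + √(b ^ 2 + 8 * L)) := by positivity
  generalize 4 / (b + √(b ^ 2 + 8 * L)) = c at *
  have hm : 0 ≤ min (G / ε) ε := le_min (by positivity) hε.le
  have hmε : min (G / ε) ε ≤ ε := min_le_right _ _
  have hmG : min (G / ε) ε * ε ≤ G := (le_div_iff₀ hε).1 (min_le_left _ _)
  generalize min (G / ε) ε = m at *
  by_contra! hlt
  have : G < m * ε := by
    calc G ≤ L / 2 * t ^ 2 + b / 2 * ε * t := hG
      _ < L / 2 * (c * m) ^ 2 + b / 2 * ε * (c * m) :=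
        add_lt_add_of_le_of_lt (by gcongr) (by gcongr)
      _ = L / 2 * c ^ 2 * (m * m) + b / 2 * ε * (c * m) := by ring
      _ ≤ L / 2 * c ^ 2 * (m * ε) + b / 2 * ε * (c * m) := by gcongr
      _ = m * ε := by linear_combination (m * ε) * hroot
  exact this.not_ge hmG

lemma sq_mul_le_mul_of_le_sq_mul {θ α δ t : ℝ} (hθ : θ ∈ Set.Icc (0 : ℝ) 1)
    (hα : α ∈ Set.Icc (0 : ℝ) 1) (ht : 0 ≤ t) (h : δ ≤ α ^ 2 * t) :
    θ ^ 2 * δ ≤ α * θ * t := by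
  have hαθ : 0 ≤ α * θ := mul_nonneg hα.1 hθ.1
  calc θ ^ 2 * δ ≤ θ ^ 2 * (α ^ 2 * t) := by gcongr
    _ = (α * θ) ^ 2 * t := by ring
    _ ≤ α * θ * t := by
      gcongr
      exact pow_le_of_le_one hαθ (mul_le_one₀ hα.2 hθ.1 hθ.2) two_ne_zero

end Scalar

section SufficientDecrease

variable {E : Type*} [NormedAddCommGroup E] [NormedSpace ℝ E]

/-- The cubic sufficient-decrease test of the backtracking line search: the step size `α` is
accepted at `x` along `d`. -/
def SufficientDecrease (f : E → ℝ) (η : ℝ) (x d : E) (α : ℝ) : Prop :=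
  f (x + α • d) < f x - η / 6 * α ^ 3 * ‖d‖ ^ 3

lemma sufficientDecrease_pow_iff {f : E → ℝ} {η θ : ℝ} {x d : E} {j : ℕ} :
    SufficientDecrease f η x d (θ ^ j) ↔
      f (x + θ ^ j • d) < f x - η / 6 * θ ^ (3 * j) * ‖d‖ ^ 3 := by
  rw [SufficientDecrease, ← pow_mul, mul_comm j]

lemma SufficientDecrease.le_sub_of_min_mul_min_le {f : E → ℝ} {η α : ℝ} {x d : E}
    (h : SufficientDecrease f η x d α) (hη : 0 ≤ η) {a b c e : ℝ}
    (hlen : min a b * min c e ≤ α * ‖d‖) :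
    η / 6 * min (a ^ 3) (b ^ 3) * min (c ^ 3) (e ^ 3) ≤ f x - f (x + α • d) := by
  have hodd : Odd 3 := by decide
  calc η / 6 * min (a ^ 3) (b ^ 3) * min (c ^ 3) (e ^ 3)
    _ = η / 6 * (min a b * min c e) ^ 3 := by rw [mul_assoc, min_pow_mul_min_pow_of_odd hodd]
    _ ≤ η / 6 * (α * ‖d‖) ^ 3 :=
      mul_le_mul_of_nonneg_left (hodd.pow_le_pow.2 hlen) (by positivity)
    _ = η / 6 * α ^ 3 * ‖d‖ ^ 3 := by ring
    _ ≤ f x - f (x + α • d) := (lt_sub_comm.1 h).le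

end SufficientDecrease

section NewtonStep

variable {E : Type*} [NormedAddCommGroup E] [InnerProductSpace ℝ E]

/-- The residual of the regularized Newton system `(H + 2 ε I) d = -g`. -/
def regularizedNewtonResidual (H : E →L[ℝ] E) (g : E) (ε : ℝ) (d : E) : E :=
  H d + (2 * ε) • d + g

/-- An approximate solution `d` of the regularized Newton system with Hessian `H` and gradient `g`,
as returned by the conjugate gradient method started at `0` with relative accuracy `ζ`. Since the
initial residual is `g`, orthogonality of the first and last residuals is `inner_residual`. -/
structure IsInexactNewtonStep (H : E →L[ℝ] E) (g : E) (ε ζ : ℝ) (d : E) : Prop where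
  norm_residual_le : ‖regularizedNewtonResidual H g ε d‖ ≤ ζ / 2 * min ‖g‖ (ε * ‖d‖)
  inner_residual : ⟪g, regularizedNewtonResidual H g ε d⟫ = 0

namespace IsInexactNewtonStep

variable {H : E →L[ℝ] E} {g d : E} {ε ζ : ℝ}

lemma norm_residual_le_norm_gradient (h : IsInexactNewtonStep H g ε ζ d) (hζ : 0 ≤ ζ) :
    ‖regularizedNewtonResidual H g ε d‖ ≤ ζ / 2 * ‖g‖ :=
  h.norm_residual_le.trans (by gcongr; exact min_le_left _ _)

lemma norm_residual_le_norm_step (h : IsInexactNewtonStep H g ε ζ d) (hζ : 0 ≤ ζ) :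
    ‖regularizedNewtonResidual H g ε d‖ ≤ ζ / 2 * (ε * ‖d‖) :=
  h.norm_residual_le.trans (by gcongr; exact min_le_right _ _)

lemma step_ne_zero (h : IsInexactNewtonStep H g ε ζ d) (hg : g ≠ 0) : d ≠ 0 := by
  rintro rfl
  simpa [regularizedNewtonResidual, hg] using h.inner_residual

lemma norm_residual_sub_gradient_le (h : IsInexactNewtonStep H g ε ζ d) (hζ : 0 ≤ ζ) :
    ‖regularizedNewtonResidual H g ε d - g‖ ≤ √(1 + ζ ^ 2 / 4) * ‖g‖ := by
  refine le_of_sq_le_sq ?_ (by positivity)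
  calc ‖regularizedNewtonResidual H g ε d - g‖ ^ 2
    _ = ‖regularizedNewtonResidual H g ε d‖ ^ 2 + ‖g‖ ^ 2 := by
      rw [norm_sub_sq_real, real_inner_comm, h.inner_residual]
      ring
    _ ≤ (ζ / 2 * ‖g‖) ^ 2 + ‖g‖ ^ 2 := by
      gcongr
      exact h.norm_residual_le_norm_gradient hζ
    _ = (√(1 + ζ ^ 2 / 4) * ‖g‖) ^ 2 := by
      rw [mul_pow, mul_pow, Real.sq_sqrt (by positivity)]
      ring

lemma mul_norm_step_le (h : IsInexactNewtonStep H g ε ζ d) (hζ : 0 ≤ ζ)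
    (hcurv : -ε * ‖d‖ ^ 2 ≤ ⟪d, H d⟫) :
    ε * ‖d‖ ≤ √(1 + ζ ^ 2 / 4) * ‖g‖ := by
  rcases (norm_nonneg d).eq_or_lt with hd | hd
  · rw [← hd, mul_zero]
    positivity
  · refine (le_of_mul_le_mul_left ?_ hd).trans (h.norm_residual_sub_gradient_le hζ)
    calc ‖d‖ * (ε * ‖d‖)
      _ ≤ ⟪d, H d⟫ + 2 * ε * ‖d‖ ^ 2 := by linarith
      _ = ⟪d, regularizedNewtonResidual H g ε d - g⟫ := by
        rw [regularizedNewtonResidual, add_sub_cancel_right, inner_add_right,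
          real_inner_smul_right, real_inner_self_eq_norm_sq]
      _ ≤ ‖d‖ * ‖regularizedNewtonResidual H g ε d - g‖ := real_inner_le_norm _ _

lemma quadratic_model_le (h : IsInexactNewtonStep H g ε ζ d) (hζ : 0 ≤ ζ)
    (hcurv : -ε * ‖d‖ ^ 2 ≤ ⟪d, H d⟫) {α : ℝ} (hα : α ∈ Set.Icc (0 : ℝ) 2) :
    ⟪g, α • d⟫ + 1 / 2 * ⟪α • d, H (α • d)⟫ ≤ -((2 - ζ + α) / 2 * ε * α * ‖d‖ ^ 2) := by
  have hres : ⟪regularizedNewtonResidual H g ε d, d⟫ ≤ ζ / 2 * ε * ‖d‖ ^ 2 := by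
    calc ⟪regularizedNewtonResidual H g ε d, d⟫
      _ ≤ ‖regularizedNewtonResidual H g ε d‖ * ‖d‖ := real_inner_le_norm _ _
      _ ≤ ζ / 2 * (ε * ‖d‖) * ‖d‖ := by
        gcongr
        exact h.norm_residual_le_norm_step hζ
      _ = ζ / 2 * ε * ‖d‖ ^ 2 := by ring
  have hgrad : ⟪g, d⟫ =
      ⟪regularizedNewtonResidual H g ε d, d⟫ - ⟪d, H d⟫ - 2 * ε * ‖d‖ ^ 2 := by
    rw [regularizedNewtonResidual, inner_add_left, inner_add_left, real_inner_smul_left,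
      real_inner_self_eq_norm_sq, real_inner_comm d (H d)]
    ring
  have hcoef : 0 ≤ α * (1 - α / 2) := mul_nonneg hα.1 (by linarith [hα.2])
  rw [map_smul, real_inner_smul_left, real_inner_smul_right, real_inner_smul_right, hgrad]
  linarith [mul_le_mul_of_nonneg_left hres hα.1, mul_le_mul_of_nonneg_left hcurv hcoef]

lemma norm_hessian_add_gradient_le (h : IsInexactNewtonStep H g ε ζ d) (hζ : 0 ≤ ζ)
    (hε : 0 ≤ ε) : ‖H d + g‖ ≤ (4 + ζ) / 2 * ε * ‖d‖ := by
  calc ‖H d + g‖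
    _ = ‖regularizedNewtonResidual H g ε d - (2 * ε) • d‖ := by
      congr 1
      rw [regularizedNewtonResidual]
      abel
    _ ≤ ‖regularizedNewtonResidual H g ε d‖ + ‖(2 * ε) • d‖ := norm_sub_le _ _
    _ ≤ ζ / 2 * (ε * ‖d‖) + 2 * ε * ‖d‖ := by
      rw [norm_smul, Real.norm_of_nonneg (by positivity)]
      gcongr
      exact h.norm_residual_le_norm_step hζ
    _ = (4 + ζ) / 2 * ε * ‖d‖ := by ring

lemma mul_min_le_norm_step (h : IsInexactNewtonStep H g ε ζ d) (hζ : 0 ≤ ζ) (hε : 0 < ε)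
    {L : ℝ} (hL : 0 ≤ L) {g₁ : E} (hg₁ : ‖g₁ - g - H d‖ ≤ L / 2 * ‖d‖ ^ 2) :
    4 / (4 + ζ + √((4 + ζ) ^ 2 + 8 * L)) * min (‖g₁‖ / ε) ε ≤ ‖d‖ := by
  refine mul_min_le_of_le_quadratic (by positivity) hL hε (norm_nonneg d) (norm_nonneg g₁) ?_
  calc ‖g₁‖ = ‖(g₁ - g - H d) + (H d + g)‖ := by congr 1; abel
    _ ≤ ‖g₁ - g - H d‖ + ‖H d + g‖ := norm_add_le _ _
    _ ≤ L / 2 * ‖d‖ ^ 2 + (4 + ζ) / 2 * ε * ‖d‖ :=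
      add_le_add hg₁ (h.norm_hessian_add_gradient_le hζ hε.le)

lemma mul_lt_of_not_sufficientDecrease {f : E → ℝ} {x : E} {L η α : ℝ}
    (h : IsInexactNewtonStep H g ε ζ d) (hζ : 0 ≤ ζ) (hε : 0 < ε)
    (hcurv : -ε * ‖d‖ ^ 2 ≤ ⟪d, H d⟫) (hd : d ≠ 0) (hα : α ∈ Set.Ioc (0 : ℝ) 2)
    (hf : f (x + α • d) - f x - ⟪g, α • d⟫ - 1 / 2 * ⟪α • d, H (α • d)⟫ ≤ L / 6 * ‖α • d‖ ^ 3)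
    (hrej : ¬ SufficientDecrease f η x d α) :
    3 * (2 - ζ) * ε < (L + η) * (α ^ 2 * ‖d‖) := by
  have hmodel := h.quadratic_model_le hζ hcurv ⟨hα.1.le, hα.2⟩
  have hα₀ : 0 < α := hα.1
  have hd₀ : 0 < ‖d‖ := norm_pos_iff.2 hd
  rw [SufficientDecrease, not_lt] at hrej
  rw [norm_smul, Real.norm_of_nonneg hα₀.le] at hf
  have hextra : 0 < α * ‖d‖ ^ 2 * (3 * α * ε) := by positivity
  have hscaled :
      α * ‖d‖ ^ 2 * (3 * (2 - ζ) * ε) < α * ‖d‖ ^ 2 * ((L + η) * (α ^ 2 * ‖d‖)) := by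
    linarith
  exact lt_of_mul_lt_mul_left hscaled (by positivity)

lemma threshold_lt_sq_of_mul_lt {K U α : ℝ} (h : IsInexactNewtonStep H g ε ζ d) (hζ : 0 ≤ ζ)
    (hε : 0 < ε) (hcurv : -ε * ‖d‖ ^ 2 ≤ ⟪d, H d⟫) (hK : 0 < K) (hU : 0 < U) (hg : ‖g‖ ≤ U)
    (hα : 3 * (1 - ζ) * ε < K * (α ^ 2 * ‖d‖)) :
    3 / K * ((1 - ζ) * ε ^ 2 / (U * √(1 + ζ ^ 2 / 4))) < α ^ 2 := by
  have hd : ε * ‖d‖ ≤ √(1 + ζ ^ 2 / 4) * U := (h.mul_norm_step_le hζ hcurv).trans (by gcongr)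
  rw [div_mul_div_comm, div_lt_iff₀ (by positivity)]
  calc 3 * ((1 - ζ) * ε ^ 2) = 3 * (1 - ζ) * ε * ε := by ring
    _ < K * (α ^ 2 * ‖d‖) * ε := by gcongr
    _ = K * α ^ 2 * (ε * ‖d‖) := by ring
    _ ≤ K * α ^ 2 * (√(1 + ζ ^ 2 / 4) * U) := by gcongr
    _ = α ^ 2 * (K * (U * √(1 + ζ ^ 2 / 4))) := by ring

end IsInexactNewtonStep

end NewtonStep

theorem inexact_regularized_newton_step_linesearch_general {E : Type*} [NormedAddCommGroup E]
    [InnerProductSpace ℝ E] [CompleteSpace E] {f : E → ℝ} {gradf : E → E} {hessf : E → E →L[ℝ] E}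
    {s : Set E} {x d : E} {L θ η ε ζ U : ℝ} (hs : StarConvex ℝ x s) (hd : x + d ∈ s)
    (hgrad : ∀ y ∈ s, HasGradientWithinAt f (gradf y) s y)
    (hhess : ∀ y ∈ s, HasFDerivWithinAt gradf (hessf y) s y)
    (hL : 0 ≤ L) (hlip : ∀ y ∈ s, ‖hessf y - hessf x‖ ≤ L * ‖y - x‖)
    (hθ : θ ∈ Set.Ioo (0 : ℝ) 1) (hη : 0 < η) (hε : 0 < ε) (hζ : ζ ∈ Set.Ico (0 : ℝ) 1)
    (hcurv : -ε * ‖d‖ ^ 2 ≤ ⟪d, hessf x d⟫) (hgU : ‖gradf x‖ ≤ U) (hg : gradf x ≠ 0)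
    (hstep : IsInexactNewtonStep (hessf x) (gradf x) ε ζ d) :
    ∃ j : ℕ, SufficientDecrease f η x d (θ ^ j) ∧
      (∀ i < j, ¬ SufficientDecrease f η x d (θ ^ i)) ∧
      (j : ℝ) ≤ max (1 / 2 * Real.logb θ
        (3 / (L + η) * ((1 - ζ) * ε ^ 2 / (U * √(1 + ζ ^ 2 / 4))))) 0 + 1 ∧
      η / 6 * min ((4 / (4 + ζ + √((4 + ζ) ^ 2 + 8 * L))) ^ 3)
          ((3 * θ ^ 2 * (1 - ζ) / (L + η)) ^ 3) *
        min (‖gradf (x + θ ^ j • d)‖ ^ 3 / ε ^ 3) (ε ^ 3) ≤ f x - f (x + θ ^ j • d) := by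
  have hU : 0 < U := (norm_pos_iff.2 hg).trans_le hgU
  have hζ₁ : 0 < 1 - ζ := sub_pos.2 hζ.2
  have hpow (i : ℕ) : θ ^ i ∈ Set.Ioc (0 : ℝ) 1 :=
    ⟨pow_pos hθ.1 i, pow_le_one₀ hθ.1.le hθ.2.le⟩
  have hrejected (i : ℕ) (hi : ¬ SufficientDecrease f η x d (θ ^ i)) :
      3 * (1 - ζ) * ε < (L + η) * ((θ ^ i) ^ 2 * ‖d‖) := by
    have htaylor := (abs_le.1 (abs_taylor_two_remainder_le hs hgrad hhess hlip
      (hs.add_smul_mem hd (hpow i).1.le (hpow i).2))).2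
    have hsharp := hstep.mul_lt_of_not_sufficientDecrease hζ.1 hε hcurv (hstep.step_ne_zero hg)
      ⟨(hpow i).1, (hpow i).2.trans one_le_two⟩ htaylor hi
    linarith
  obtain ⟨j, hacc, hrej, hj⟩ := exists_backtracking_exponent hθ (by positivity) two_ne_zero
    fun i hi ↦ hstep.threshold_lt_sq_of_mul_lt hζ.1 hε hcurv (by positivity) hU hgU
      (hrejected i hi)
  refine ⟨j, hacc, hrej, mod_cast hj, ?_⟩
  rw [← div_pow]
  refine hacc.le_sub_of_min_mul_min_le hη.le ?_
  rcases j with _ | k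
  · simp only [pow_zero, one_smul, one_mul]
    exact (mul_le_mul_of_nonneg_right (min_le_left _ _) (by positivity)).trans
      (hstep.mul_min_le_norm_step hζ.1 hε hL (norm_taylor_one_remainder_le hs hhess hlip hd))
  · rw [pow_succ]
    have hlength : θ ^ 2 * (3 * (1 - ζ) * ε / (L + η)) ≤ θ ^ k * θ * ‖d‖ :=
      sq_mul_le_mul_of_le_sq_mul ⟨hθ.1.le, hθ.2.le⟩ ⟨(hpow k).1.le, (hpow k).2⟩ (norm_nonneg d)
        ((div_le_iff₀' (by positivity)).2 (hrejected k (hrej k k.lt_succ_self)).le)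
    calc _ ≤ 3 * θ ^ 2 * (1 - ζ) / (L + η) * ε :=
          mul_le_mul (min_le_right _ _) (min_le_right _ _) (by positivity) (by positivity)
      _ = θ ^ 2 * (3 * (1 - ζ) * ε / (L + η)) := by ring
      _ ≤ θ ^ k * θ * ‖d‖ := hlength

/-- Lemma 3.5: line search along the inexact regularized Newton direction. -/
theorem inexact_regularized_newton_step_linesearch
    {n : ℕ} (f : EuclideanSpace ℝ (Fin n) → ℝ)
    (gradf : EuclideanSpace ℝ (Fin n) → EuclideanSpace ℝ (Fin n))
    (hessf : EuclideanSpace ℝ (Fin n) → EuclideanSpace ℝ (Fin n) →L[ℝ] EuclideanSpace ℝ (Fin n))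
    (hf : ContDiff ℝ 2 f)
    (hgrad : ∀ x, HasGradientAt f (gradf x) x)
    (hhess : ∀ x, HasFDerivAt gradf (hessf x) x)
    (L_H : ℝ) (hLH : 0 < L_H)
    (hlip : ∀ x y, ‖hessf x - hessf y‖ ≤ L_H * ‖x - y‖)
    (θ η ε_H ζ U_g : ℝ) (hθ : θ ∈ Set.Ioo (0:ℝ) 1) (hη : 0 < η)
    (hεH : ε_H ∈ Set.Ioo (0:ℝ) 1) (hζ : ζ ∈ Set.Ioo (0:ℝ) 1) (hUg : 0 < U_g)
    (x d : EuclideanSpace ℝ (Fin n))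
    (hpsd : ∀ v : EuclideanSpace ℝ (Fin n), -ε_H * ‖v‖^2 ≤ ⟪v, hessf x v⟫)
    (hgb : ‖gradf x‖ ≤ U_g) (hgne : gradf x ≠ 0)
    (hres : ‖hessf x d + (2*ε_H) • d + gradf x‖ ≤ ζ/2 * min (‖gradf x‖) (ε_H * ‖d‖))
    (horth : ⟪gradf x, hessf x d + (2*ε_H) • d + gradf x⟫ = 0) :
    ∃ jk : ℕ,
      (f (x + θ^jk • d) < f x - η/6 * θ^(3*jk) * ‖d‖^3) ∧
      (∀ j : ℕ, j < jk → ¬ (f (x + θ^j • d) < f x - η/6 * θ^(3*j) * ‖d‖^3)) ∧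
      (jk : ℝ) ≤ max ((1/2) * Real.logb θ
        (3/(L_H+η) * ((1-ζ) * ε_H^2 / (U_g * Real.sqrt (1+ζ^2/4))))) 0 + 1 ∧
      f x - f (x + θ^jk • d) ≥
        η/6 * min ((4/(4 + ζ + Real.sqrt ((4+ζ)^2 + 8*L_H)))^3) ((3*θ^2*(1-ζ)/(L_H+η))^3) *
          min (‖gradf (x + θ^jk • d)‖^3 / ε_H^3) (ε_H^3) := by
  simpa only [sufficientDecrease_pow_iff] using
    inexact_regularized_newton_step_linesearch_general (starConvex_univ x) (Set.mem_univ _)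
      (fun y _ ↦ (hgrad y).hasFDerivAt.hasFDerivWithinAt) (fun y _ ↦ (hhess y).hasFDerivWithinAt)
      hLH.le (fun y _ ↦ hlip y x) hθ hη hεH.1 ⟨hζ.1.le, hζ.2⟩ (hpsd d) hgb hgne ⟨hres, horth⟩
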